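/- Fix n ≥ 1, an additive Haar measure μ on the real vector space Sym_n(ℝ) of n×n real symmetric matrices, reals η₁ > n−1 and η₂ > n−1, and an n×n real symmetric positive definite matrix Σ. Then there exists a constant c > 0 such that for every s ∈ Sym_n(ℝ): ∫ w_{η₁,Σ}(x) · w_{η₂,Σ}(s − x) dμ(x) = c · w_{η₁+η₂,Σ}(s). In particular, the sum of two independent Wishart random matrices with shapes η₁, η₂ and common scale Σ is Wishart with shape η₁ + η₂ and scale Σ. -/

import Mathlib

open MeasureTheory
open scoped ENNReal Matrix

instance matrixMeasurableSpace {m n α : Type*} [MeasurableSpace α] :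
    MeasurableSpace (Matrix m n α) := by unfold Matrix; infer_instance

/-- The real vector space `Sym_n(ℝ)` of `n × n` real symmetric matrices,
as a submodule of the matrix space. -/
def symMatSubmodule (n : ℕ) : Submodule ℝ (Matrix (Fin n) (Fin n) ℝ) where
  carrier := {x | x.IsSymm}
  add_mem' := fun {a b} ha hb => by
    have ha' : aᵀ = a := ha
    have hb' : bᵀ = b := hb
    show (a + b)ᵀ = a + b
    rw [Matrix.transpose_add, ha', hb']
  zero_mem' := Matrix.transpose_zero
  smul_mem' := fun c a ha => by
    have ha' : aᵀ = a := ha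
    show (c • a)ᵀ = c • a
    rw [Matrix.transpose_smul, ha']

/-- `SymMat n` : the type of `n × n` real symmetric matrices. -/
abbrev SymMat (n : ℕ) : Type := ↥(symMatSubmodule n)

open Classical in
/-- The (unnormalized) Wishart density with shape `η` and scale `S` on `Sym_n(ℝ)`:
`exp(−tr(S⁻¹x)/2)·det(x)^{η/2−(n+1)/2}` on positive definite `x`, `0` elsewhere. -/
noncomputable def wishartDensity (n : ℕ) (η : ℝ) (S : Matrix (Fin n) (Fin n) ℝ)
    (x : SymMat n) : ℝ :=
  if (x : Matrix (Fin n) (Fin n) ℝ).PosDef then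
    Real.exp (-(S⁻¹ * (x : Matrix (Fin n) (Fin n) ℝ)).trace / 2) *
      (x : Matrix (Fin n) (Fin n) ℝ).det ^ (η / 2 - ((n : ℝ) + 1) / 2)
  else 0

/-!
The exponential factors of the two densities multiply to `exp (ℓ s)`, where `ℓ x = -tr(S⁻¹x)/2`,
so only the convolution `B(s)` of `det ^ a` and `det ^ b` on the positive definite cone matters.
Writing `s = q qᵀ` and substituting `x ↦ q x qᵀ`, whose Jacobian on `Sym_n(ℝ)` is
`|det q| ^ (n + 1)`, gives `B(s) = B(1) * det s ^ (a + b + (n + 1) / 2)`.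

It remains to see that `B(1)`, a multivariate beta integral, is finite when `a, b > -1`. Bordering
a matrix by one row and column multiplies its determinant by a Schur complement, which is a
translate of the corner entry; hence, by induction on `n`, `det ^ a` is integrable over
`0 < x < 1`. The convolution of the truncations of `det ^ a` and `det ^ b` to this interval is
therefore integrable, and agrees with `B` on the interval. So `B(s)` is finite for some
`0 < s < 1`, and homogeneity carries this to `s = 1`.
-/

instance matrixBorelSpace {m n α : Type*} [Countable m] [Countable n] [TopologicalSpace α]
    [SecondCountableTopology α] [MeasurableSpace α] [BorelSpace α] : BorelSpace (Matrix m n α) :=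
  inferInstanceAs (BorelSpace (m → n → α))

instance matrixSecondCountableTopology {m n α : Type*} [Countable m] [Countable n]
    [TopologicalSpace α] [SecondCountableTopology α] : SecondCountableTopology (Matrix m n α) :=
  inferInstanceAs (SecondCountableTopology (m → n → α))

open scoped NNReal

section Measure

theorem lintegral_Ioc_ofReal_rpow_lt_top {a : ℝ} (ha : -1 < a) :
    ∫⁻ t in Set.Ioc (0 : ℝ) 1, ENNReal.ofReal (t ^ a) < ∞ :=
  (intervalIntegral.intervalIntegrable_rpow' (a := 0) (b := 1) ha).1.lintegral_lt_top

theorem lintegral_lconvolution {G : Type*} [MeasurableSpace G] [AddGroup G] [MeasurableAdd₂ G]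
    [MeasurableNeg G] (μ : Measure G) [SFinite μ] [μ.IsAddLeftInvariant] {f g : G → ℝ≥0∞}
    (hf : Measurable f) (hg : Measurable g) :
    ∫⁻ x, (f ⋆ₗ[μ] g) x ∂μ = (∫⁻ x, f x ∂μ) * ∫⁻ x, g x ∂μ := by
  simp only [lconvolution_def]
  rw [lintegral_lintegral_swap (by fun_prop), ← lintegral_mul_const _ hf]
  refine lintegral_congr fun y => ?_
  rw [lintegral_const_mul _ (by fun_prop), lintegral_add_left_eq_self g]

theorem lintegral_mul_mul_comp_sub {X Y G : Type*} [MeasurableSpace X] [MeasurableSpace Y]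
    [MeasurableSpace G] [AddGroup G] [MeasurableAdd G] (μ : Measure X) (ν : Measure Y)
    (ρ : Measure G) [ρ.IsAddRightInvariant] {f : X → ℝ≥0∞} {g : Y → ℝ≥0∞} {h : G → ℝ≥0∞}
    (hf : Measurable f) (hg : Measurable g) (hh : Measurable h) (φ : X → Y → G) :
    ∫⁻ x, ∫⁻ y, ∫⁻ t, f x * (g y * h (t - φ x y)) ∂ρ ∂ν ∂μ =
      (∫⁻ x, f x ∂μ) * ((∫⁻ y, g y ∂ν) * ∫⁻ t, h t ∂ρ) := by
  have hsub (u : G) : Measurable fun t => h (t - u) := by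
    simp only [sub_eq_add_neg]
    fun_prop
  rw [← lintegral_mul_const _ hf]
  refine lintegral_congr fun x => ?_
  rw [← lintegral_mul_const _ hg, ← lintegral_const_mul _ (by fun_prop)]
  refine lintegral_congr fun y => ?_
  rw [lintegral_const_mul _ ((hsub _).const_mul _), lintegral_const_mul _ (hsub _),
    lintegral_sub_right_eq_self h]

variable {E : Type*} [AddCommGroup E] [Module ℝ E] [TopologicalSpace E] [IsTopologicalAddGroup E]
  [ContinuousSMul ℝ E] [T2Space E] [FiniteDimensional ℝ E] [MeasurableSpace E] [BorelSpace E]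
  (μ : Measure E) [μ.IsAddHaarMeasure] {L : E →ₗ[ℝ] E}

/-- The library's `MeasureTheory.Measure.map_linearMap_addHaar_eq_smul_addHaar` needs a norm on
`E`, and `SymMat n` carries none; hence the transport to coordinates. -/
theorem map_linearMap_addHaar_of_finiteDimensional (hL : LinearMap.det L ≠ 0) :
    μ.map L = ENNReal.ofReal |(LinearMap.det L)⁻¹| • μ := by
  let e : E ≃L[ℝ] (Fin (Module.finrank ℝ E) → ℝ) :=
    (Module.finBasis ℝ E).equivFunL
  let L' := e.toLinearEquiv.toLinearMap ∘ₗ L ∘ₗ e.toLinearEquiv.symm.toLinearMap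
  have hdet : LinearMap.det L' = LinearMap.det L := LinearMap.det_conj L e.toLinearEquiv
  have hL' : Measurable L' := L'.continuous_of_finiteDimensional.measurable
  have he : Measurable e := e.continuous.measurable
  have hes : Measurable e.symm := e.symm.continuous.measurable
  have hconj : (L : E → E) = e.symm ∘ L' ∘ e := by ext; simp [L']
  have : (μ.map e).IsAddHaarMeasure := e.isAddHaarMeasure_map μ
  calc μ.map L = ((μ.map e).map L').map e.symm := by
        rw [Measure.map_map hL' he, Measure.map_map hes (hL'.comp he), hconj]
    _ = ENNReal.ofReal |(LinearMap.det L)⁻¹| • (μ.map e).map e.symm := by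
        rw [Measure.map_linearMap_addHaar_eq_smul_addHaar _ (hdet ▸ hL), Measure.map_smul, hdet]
    _ = ENNReal.ofReal |(LinearMap.det L)⁻¹| • μ := by
        rw [Measure.map_map hes he, e.symm_comp_self, Measure.map_id]

theorem ofReal_abs_det_mul_lintegral_comp_linearMap (hL : LinearMap.det L ≠ 0) (f : E → ℝ≥0∞) :
    ENNReal.ofReal |LinearMap.det L| * ∫⁻ x, f (L x) ∂μ = ∫⁻ x, f x ∂μ := by
  have hemb : MeasurableEmbedding L :=
    (LinearMap.equivOfDetNeZero L hL).toContinuousLinearEquiv.toHomeomorph.measurableEmbedding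
  rw [← hemb.lintegral_map, map_linearMap_addHaar_of_finiteDimensional μ hL,
    lintegral_smul_measure, smul_eq_mul, ← mul_assoc, ← ENNReal.ofReal_mul (abs_nonneg _),
    ← abs_mul, mul_inv_cancel₀ hL, abs_one, ENNReal.ofReal_one, one_mul]

theorem lconvolution_apply_linearMap (hL : LinearMap.det L ≠ 0) (f g : E → ℝ≥0∞) (s : E) :
    (f ⋆ₗ[μ] g) (L s) = ENNReal.ofReal |LinearMap.det L| * ((f ∘ L) ⋆ₗ[μ] (g ∘ L)) s := by
  simp only [lconvolution_def, ← ofReal_abs_det_mul_lintegral_comp_linearMap μ hL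
    fun x => f x * g (-x + L s), Function.comp_apply, map_add, map_neg]

end Measure

section Matrix

variable {ι : Type*} [Fintype ι]

theorem isOpen_setOf_forall_dotProduct_mulVec_pos :
    IsOpen {x : Matrix ι ι ℝ | ∀ v ≠ 0, 0 < v ⬝ᵥ x *ᵥ v} := by
  have hsphere : {x : Matrix ι ι ℝ | ∀ v ≠ 0, 0 < v ⬝ᵥ x *ᵥ v} =
      {x | ∀ v ∈ Metric.sphere (0 : ι → ℝ) 1, 0 < v ⬝ᵥ x *ᵥ v} := by
    ext x
    refine ⟨fun h v hv => h v (ne_zero_of_mem_unit_sphere ⟨v, hv⟩), fun h v hv => ?_⟩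
    have hnorm : 0 < ‖v‖⁻¹ := inv_pos.2 (norm_pos_iff.2 hv)
    have hunit := h (‖v‖⁻¹ • v) (by simp [norm_smul, hv])
    rw [Matrix.mulVec_smul, smul_dotProduct, dotProduct_smul, smul_eq_mul, smul_eq_mul] at hunit
    exact pos_of_mul_pos_right (pos_of_mul_pos_right hunit hnorm.le) hnorm.le
  rw [hsphere, isOpen_iff_mem_nhds]
  intro x hx
  refine (isCompact_sphere _ _).eventually_forall_of_forall_eventually fun v hv => ?_
  have hcont : Continuous fun z : Matrix ι ι ℝ × (ι → ℝ) => z.2 ⬝ᵥ z.1 *ᵥ z.2 := by fun_prop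
  exact hcont.continuousAt.eventually (lt_mem_nhds (hx v hv))

theorem sq_apply_le_mul_diag_of_posSemidef {ι : Type*} {x : Matrix ι ι ℝ} (hx : x.PosSemidef)
    (i j : ι) : x i j ^ 2 ≤ x i i * x j j := by
  have hminor := (hx.submatrix ![i, j]).det_nonneg
  have hsymm : x j i = x i j := by simpa using hx.isHermitian.apply i j
  simp only [Matrix.det_fin_two, Matrix.submatrix_apply, Matrix.cons_val_zero,
    Matrix.cons_val_one, hsymm] at hminor
  linarith

open scoped MatrixOrder Matrix.Norms.L2Operator in
theorem exists_isUnit_eq_mul_transpose_of_posDef [DecidableEq ι] {s : Matrix ι ι ℝ}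
    (hs : s.PosDef) : ∃ q : Matrix ι ι ℝ, IsUnit q ∧ s = q * qᵀ := by
  obtain ⟨y, hy, hsy⟩ := CStarAlgebra.isStrictlyPositive_iff_eq_star_mul_self.1
    hs.isStrictlyPositive
  exact ⟨yᵀ, y.isUnit_transpose.2 hy, by simpa [Matrix.star_eq_conjTranspose] using hsy⟩

end Matrix

namespace SymMat

instance secondCountableTopology (n : ℕ) : SecondCountableTopology (SymMat n) :=
  TopologicalSpace.Subtype.secondCountableTopology _

instance locallyCompactSpace (n : ℕ) : LocallyCompactSpace (SymMat n) :=
  .of_finiteDimensional_of_complete ℝ _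

instance one (n : ℕ) : One (SymMat n) :=
  ⟨⟨1, Matrix.transpose_one⟩⟩

@[simp]
theorem coe_one (n : ℕ) : ((1 : SymMat n) : Matrix (Fin n) (Fin n) ℝ) = 1 :=
  rfl

/-- The linear map `x ↦ M x Mᵀ` from `n × n` to `m × m` symmetric matrices. -/
def congruence {m n : ℕ} (M : Matrix (Fin m) (Fin n) ℝ) : SymMat n →ₗ[ℝ] SymMat m where
  toFun x := ⟨M * x.1 * Mᵀ, by
    have hx : x.1ᵀ = x.1 := x.2
    change (M * x.1 * Mᵀ)ᵀ = M * x.1 * Mᵀ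
    simp [Matrix.transpose_mul, hx, Matrix.mul_assoc]⟩
  map_add' x y := by ext1; simp [Matrix.mul_add, Matrix.add_mul]
  map_smul' c x := by ext1; simp

section Congruence

variable {l m n : ℕ}

@[simp]
theorem coe_congruence (M : Matrix (Fin m) (Fin n) ℝ) (x : SymMat n) :
    (congruence M x : Matrix (Fin m) (Fin m) ℝ) = M * x.1 * Mᵀ :=
  rfl

theorem congruence_mul (M : Matrix (Fin l) (Fin m) ℝ) (N : Matrix (Fin m) (Fin n) ℝ) :
    congruence (M * N) = congruence M ∘ₗ congruence N := by
  ext1 x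
  ext1
  simp [Matrix.transpose_mul, Matrix.mul_assoc]

@[simp]
theorem congruence_one : congruence (1 : Matrix (Fin n) (Fin n) ℝ) = LinearMap.id := by
  ext1 x
  ext1
  simp

theorem posDef_congruence_iff {q : Matrix (Fin n) (Fin n) ℝ} (hq : IsUnit q) {x : SymMat n} :
    (congruence q x).1.PosDef ↔ x.1.PosDef := by
  simpa [Matrix.star_eq_conjTranspose] using Matrix.IsUnit.posDef_star_right_conjugate_iff hq

end Congruence

/-- The symmetric matrix with blocks `A`, `v`, `vᵀ`, `t`, as a linear function of `(A, v, t)`. -/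
def bordered (n : ℕ) : (SymMat n × (Fin n → ℝ) × ℝ) ≃ₗ[ℝ] SymMat (n + 1) where
  toFun p :=
    ⟨(Matrix.fromBlocks p.1.1 (Matrix.replicateCol (Fin 1) p.2.1)
        (Matrix.replicateRow (Fin 1) p.2.1) (Matrix.of fun _ _ => p.2.2)).submatrix
        finSumFinEquiv.symm finSumFinEquiv.symm,
      (Matrix.IsSymm.fromBlocks p.1.2 rfl (Matrix.IsSymm.ext fun _ _ => rfl)).submatrix _⟩
  invFun x := (⟨x.1.submatrix Fin.castSucc Fin.castSucc, Matrix.IsSymm.submatrix x.2 _⟩,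
    fun i => x.1 i.castSucc (Fin.last n), x.1 (Fin.last n) (Fin.last n))
  map_add' p q := by
    ext i j
    induction i using Fin.lastCases <;> induction j using Fin.lastCases <;> simp
  map_smul' c p := by
    ext i j
    induction i using Fin.lastCases <;> induction j using Fin.lastCases <;> simp
  left_inv p := by ext <;> simp
  right_inv x := by
    have hx (i j) : x.1 i j = x.1 j i := Matrix.IsSymm.apply x.2 j i
    ext i j
    induction i using Fin.lastCases <;> induction j using Fin.lastCases <;> simp [hx]

section Bordered

variable {n : ℕ} (A : SymMat n) (v : Fin n → ℝ) (t : ℝ)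

@[simp]
theorem bordered_castSucc_castSucc (i j : Fin n) :
    (bordered n (A, v, t)).1 i.castSucc j.castSucc = A.1 i j := by
  simp [bordered]

@[simp]
theorem bordered_castSucc_last (i : Fin n) :
    (bordered n (A, v, t)).1 i.castSucc (Fin.last n) = v i := by
  simp [bordered]

@[simp]
theorem bordered_last_castSucc (i : Fin n) :
    (bordered n (A, v, t)).1 (Fin.last n) i.castSucc = v i := by
  simp [bordered]

@[simp]
theorem bordered_last_last : (bordered n (A, v, t)).1 (Fin.last n) (Fin.last n) = t := by
  simp [bordered]

theorem submatrix_castSucc_bordered :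
    (bordered n (A, v, t)).1.submatrix Fin.castSucc Fin.castSucc = A.1 := by
  ext i j
  simp

theorem one_sub_bordered : 1 - bordered n (A, v, t) = bordered n (1 - A, -v, 1 - t) := by
  ext i j
  induction i using Fin.lastCases <;> induction j using Fin.lastCases <;>
    simp [Matrix.one_apply, Fin.castSucc_ne_last, (Fin.castSucc_ne_last _).symm]

theorem det_bordered (hA : IsUnit A.1) :
    (bordered n (A, v, t)).1.det = A.1.det * (t - v ⬝ᵥ A.1⁻¹ *ᵥ v) := by
  have : Invertible A.1 := hA.invertible
  change (Matrix.submatrix _ _ _).det = _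
  rw [Matrix.det_submatrix_equiv_self, Matrix.det_fromBlocks₁₁, Matrix.invOf_eq_nonsing_inv,
    Matrix.det_fin_one, Matrix.mul_assoc]
  simp [Matrix.mul_apply, Matrix.mulVec, dotProduct]

variable {A v t}

theorem posDef_of_posDef_bordered (h : (bordered n (A, v, t)).1.PosDef) : A.1.PosDef := by
  simpa only [submatrix_castSucc_bordered] using h.submatrix (Fin.castSucc_injective n)

theorem sub_dotProduct_inv_mulVec_pos_of_posDef_bordered (h : (bordered n (A, v, t)).1.PosDef) :
    0 < t - v ⬝ᵥ A.1⁻¹ *ᵥ v := by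
  have hA := posDef_of_posDef_bordered h
  have hdet := h.det_pos
  rw [det_bordered A v t hA.isUnit] at hdet
  exact pos_of_mul_pos_right hdet hA.det_pos.le

end Bordered

section DetCongruence

variable {n : ℕ}

theorem congruence_diagonal_bordered (d : Fin (n + 1) → ℝ) (A : SymMat n) (v : Fin n → ℝ)
    (t : ℝ) :
    congruence (Matrix.diagonal d) (bordered n (A, v, t)) =
      bordered n (congruence (Matrix.diagonal fun i => d i.castSucc) A,
        fun i => (d (Fin.last n) * d i.castSucc) * v i,
        (d (Fin.last n) * d (Fin.last n)) * t) := by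
  ext i j
  induction i using Fin.lastCases <;> induction j using Fin.lastCases <;>
    simp [Matrix.diagonal_mul, Matrix.mul_diagonal] <;> ring

theorem det_congruence_diagonal (d : Fin n → ℝ) :
    LinearMap.det (congruence (Matrix.diagonal d)) = (∏ i, d i) ^ (n + 1) := by
  induction n with
  | zero => simp [LinearMap.det_eq_one_of_subsingleton]
  | succ n ih =>
    let d' (i : Fin n) : ℝ := d i.castSucc
    let r := d (Fin.last n)
    let onBorder : (Fin n → ℝ) →ₗ[ℝ] (Fin n → ℝ) :=
      LinearMap.pi fun i => ((r * d' i) • (LinearMap.id : ℝ →ₗ[ℝ] ℝ)) ∘ₗ LinearMap.proj i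
    let onCorner : ℝ →ₗ[ℝ] ℝ := (r * r) • LinearMap.id
    have hconj : congruence (Matrix.diagonal d) = (bordered n).toLinearMap ∘ₗ
        (congruence (Matrix.diagonal d')).prodMap (onBorder.prodMap onCorner) ∘ₗ
          (bordered n).symm.toLinearMap := by
      refine LinearMap.ext fun x => ?_
      obtain ⟨⟨A, v, t⟩, rfl⟩ := (bordered n).surjective x
      have honBorder : onBorder v = fun i => r * d' i * v i := rfl
      simp [congruence_diagonal_bordered, honBorder, onCorner, d', r]
    have hborder : LinearMap.det onBorder = r ^ n * ∏ i, d' i := by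
      simp [onBorder, LinearMap.det_pi, Finset.prod_mul_distrib]
    have hcorner : LinearMap.det onCorner = r * r := by simp [onCorner]
    rw [hconj, LinearMap.det_conj, LinearMap.det_prodMap, LinearMap.det_prodMap, ih, hborder,
      hcorner, Fin.prod_univ_castSucc]
    ring

/-- Conjugating by a diagonal matrix doubles `c`, while `c ↦ det` turns sums into products. -/
theorem det_congruence_transvection {i j : Fin n} (hij : i ≠ j) (c : ℝ) :
    LinearMap.det (congruence (Matrix.transvection i j c)) = 1 := by
  let δ (c : ℝ) : ℝ := LinearMap.det (congruence (Matrix.transvection i j c))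
  have hadd (a b : ℝ) : δ (a + b) = δ a * δ b := by
    simp only [δ, ← Matrix.transvection_mul_transvection_same _ _ hij, congruence_mul,
      LinearMap.det_comp]
  have hne : δ c ≠ 0 := by
    have hzero : δ c * δ (-c) = 1 := by
      rw [← hadd]
      simp [δ]
    exact left_ne_zero_of_mul_eq_one hzero
  let D : Matrix (Fin n) (Fin n) ℝ := Matrix.diagonal (Function.update 1 i 2)
  have hD : LinearMap.det (congruence D) ≠ 0 := by
    rw [det_congruence_diagonal]
    refine pow_ne_zero _ (Finset.prod_ne_zero_iff.2 fun k _ => ?_)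
    by_cases hk : k = i <;> simp [hk]
  have hcomm : D * Matrix.transvection i j c = Matrix.transvection i j (c + c) * D := by
    ext k l
    by_cases hk : k = i <;> by_cases hl : l = j <;>
    simp [Matrix.transvection, Matrix.diagonal_mul, Matrix.mul_diagonal, D, Matrix.one_apply,
      Matrix.single_apply, Function.update_apply, hk, hl] <;> grind
  have hdouble : LinearMap.det (congruence D) * δ c = δ c * δ c * LinearMap.det (congruence D) := by
    rw [← hadd, ← LinearMap.det_comp, ← LinearMap.det_comp, ← congruence_mul, ← congruence_mul,
      hcomm]
  refine mul_left_cancel₀ (mul_ne_zero hD hne) ?_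
  linear_combination -hdouble

theorem det_congruence (M : Matrix (Fin n) (Fin n) ℝ) :
    LinearMap.det (congruence M) = M.det ^ (n + 1) := by
  induction M using Matrix.diagonal_transvection_induction with
  | hdiag D => rw [det_congruence_diagonal, Matrix.det_diagonal]
  | htransvec t =>
    rw [t.det, one_pow]
    exact det_congruence_transvection t.hij t.c
  | hmul A B hA hB => rw [congruence_mul, LinearMap.det_comp, hA, hB, Matrix.det_mul, mul_pow]

end DetCongruence

/-- The open cone of positive definite matrices in `SymMat n`. -/
def posDefCone (n : ℕ) : Set (SymMat n) :=
  {x | x.1.PosDef}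

/-- The Loewner order interval `0 < x < 1` in `SymMat n`, on which the powers of the determinant
are integrated. -/
def loewnerInterval (n : ℕ) : Set (SymMat n) :=
  {x | x ∈ posDefCone n ∧ 1 - x ∈ posDefCone n}

section Cone

variable {n : ℕ}

theorem isOpen_posDefCone : IsOpen (posDefCone n) := by
  have hcone : posDefCone n = Subtype.val ⁻¹' {x | ∀ v ≠ 0, 0 < v ⬝ᵥ x *ᵥ v} := by
    ext x
    have hx : x.1.IsHermitian := x.2
    exact Matrix.posDef_iff_dotProduct_mulVec.trans (and_iff_right hx)
  exact hcone ▸ isOpen_setOf_forall_dotProduct_mulVec_pos.preimage continuous_subtype_val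

theorem add_mem_posDefCone {x y : SymMat n} (hx : x ∈ posDefCone n) (hy : y ∈ posDefCone n) :
    x + y ∈ posDefCone n :=
  Matrix.PosDef.add hx hy

theorem isOpen_loewnerInterval : IsOpen (loewnerInterval n) :=
  isOpen_posDefCone.inter (isOpen_posDefCone.preimage (continuous_const.sub continuous_id))

theorem loewnerInterval_nonempty : (loewnerInterval n).Nonempty := by
  have hhalf : (1 / 2 : ℝ) • (1 : SymMat n) ∈ posDefCone n :=
    Matrix.PosDef.one.smul (by norm_num : (0 : ℝ) < 1 / 2)
  have hcompl : 1 - (1 / 2 : ℝ) • (1 : SymMat n) = (1 / 2 : ℝ) • 1 := by module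
  exact ⟨_, hhalf, hcompl.symm ▸ hhalf⟩

theorem mem_loewnerInterval_of_sub_mem_posDefCone {s x : SymMat n} (hs : s ∈ loewnerInterval n)
    (hx : x ∈ posDefCone n) (hsx : s - x ∈ posDefCone n) : x ∈ loewnerInterval n :=
  ⟨hx, by simpa using add_mem_posDefCone hs.2 hsx⟩

theorem apply_self_mem_Ioo_of_mem_loewnerInterval {x : SymMat n} (hx : x ∈ loewnerInterval n)
    (i : Fin n) : x.1 i i ∈ Set.Ioo 0 1 := by
  have h : 0 < (1 - x).1 i i := hx.2.diag_pos
  exact ⟨hx.1.diag_pos, by simpa using h⟩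

theorem mem_loewnerInterval_of_bordered {A : SymMat n} {v : Fin n → ℝ} {t : ℝ}
    (h : bordered n (A, v, t) ∈ loewnerInterval (n + 1)) : A ∈ loewnerInterval n :=
  ⟨posDef_of_posDef_bordered h.1, posDef_of_posDef_bordered (one_sub_bordered A v t ▸ h.2)⟩

theorem mem_Icc_of_bordered_mem_loewnerInterval {A : SymMat n} {v : Fin n → ℝ} {t : ℝ}
    (h : bordered n (A, v, t) ∈ loewnerInterval (n + 1)) : v ∈ Set.Icc (-1) 1 := by
  have hsq (i : Fin n) : v i ^ 2 ≤ 1 := by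
    have hminor := sq_apply_le_mul_diag_of_posSemidef h.1.posSemidef i.castSucc (Fin.last n)
    have hA := apply_self_mem_Ioo_of_mem_loewnerInterval h i.castSucc
    have ht := apply_self_mem_Ioo_of_mem_loewnerInterval h (Fin.last n)
    rw [bordered_castSucc_last] at hminor
    exact hminor.trans (mul_le_one₀ hA.2.le ht.1.le ht.2.le)
  exact ⟨fun i => (abs_le.1 ((sq_le_one_iff_abs_le_one _).1 (hsq i))).1,
    fun i => (abs_le.1 ((sq_le_one_iff_abs_le_one _).1 (hsq i))).2⟩

theorem sub_dotProduct_inv_mulVec_mem_Ioc_of_bordered_mem_loewnerInterval {A : SymMat n}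
    {v : Fin n → ℝ} {t : ℝ} (h : bordered n (A, v, t) ∈ loewnerInterval (n + 1)) :
    t - v ⬝ᵥ A.1⁻¹ *ᵥ v ∈ Set.Ioc 0 1 := by
  have ht : t < 1 := by
    simpa using (apply_self_mem_Ioo_of_mem_loewnerInterval h (Fin.last n)).2
  have hinv : 0 ≤ v ⬝ᵥ A.1⁻¹ *ᵥ v := by
    simpa using (posDef_of_posDef_bordered h.1).inv.posSemidef.dotProduct_mulVec_nonneg v
  exact ⟨sub_dotProduct_inv_mulVec_pos_of_posDef_bordered h.1, by linarith⟩

end Cone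

/-- The function `x ↦ det x ^ a` on the positive definite cone, extended by `0`. It takes values
in `ℝ≥0∞` so that its convolutions make sense before they are known to be finite. -/
noncomputable def detRpow {n : ℕ} (a : ℝ) : SymMat n → ℝ≥0∞ :=
  (posDefCone n).indicator fun x => ENNReal.ofReal (x.1.det ^ a)

section DetRpow

variable {n : ℕ} (a : ℝ)

theorem detRpow_of_mem {x : SymMat n} (hx : x ∈ posDefCone n) :
    detRpow a x = ENNReal.ofReal (x.1.det ^ a) :=
  Set.indicator_of_mem hx _

theorem detRpow_of_notMem {x : SymMat n} (hx : x ∉ posDefCone n) : detRpow a x = 0 :=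
  Set.indicator_of_notMem hx _

theorem detRpow_ne_top (x : SymMat n) : detRpow a x ≠ ∞ := by
  by_cases hx : x ∈ posDefCone n
  · simp [detRpow_of_mem a hx]
  · simp [detRpow_of_notMem a hx]

theorem detRpow_ne_zero {x : SymMat n} (hx : x ∈ posDefCone n) : detRpow a x ≠ 0 := by
  rw [detRpow_of_mem a hx]
  exact (ENNReal.ofReal_pos.2 (Real.rpow_pos_of_pos hx.det_pos a)).ne'

@[fun_prop]
theorem measurable_detRpow : Measurable (detRpow a : SymMat n → ℝ≥0∞) := by
  refine Measurable.indicator ?_ isOpen_posDefCone.measurableSet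
  have hdet : Measurable fun x : SymMat n => x.1.det := by
    refine Continuous.measurable ?_
    fun_prop
  fun_prop

theorem detRpow_congruence {q : Matrix (Fin n) (Fin n) ℝ} (hq : IsUnit q) (x : SymMat n) :
    detRpow a (congruence q x) = ENNReal.ofReal ((q.det ^ 2) ^ a) * detRpow a x := by
  by_cases hx : x ∈ posDefCone n
  · have hdet : (congruence q x).1.det = q.det ^ 2 * x.1.det := by
      simp only [coe_congruence, Matrix.det_mul, Matrix.det_transpose]
      ring
    rw [detRpow_of_mem a hx, detRpow_of_mem a ((posDef_congruence_iff hq).2 hx), hdet,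
      Real.mul_rpow (sq_nonneg _) hx.det_pos.le, ENNReal.ofReal_mul (by positivity)]
  · rw [detRpow_of_notMem a hx, detRpow_of_notMem a (mt (posDef_congruence_iff hq).1 hx), mul_zero]

end DetRpow

section Integrability

variable {n : ℕ}

theorem exists_lintegral_eq_mul_lintegral_bordered (μ : Measure (SymMat (n + 1)))
    [μ.IsAddHaarMeasure] (ν : Measure (SymMat n)) [ν.IsAddHaarMeasure] :
    ∃ c : ℝ≥0, ∀ F : SymMat (n + 1) → ℝ≥0∞, Measurable F →
      ∫⁻ x, F x ∂μ = c * ∫⁻ A, ∫⁻ v, ∫⁻ t, F (bordered n (A, v, t)) ∂volume ∂volume ∂ν := by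
  let ρ : Measure (SymMat n × (Fin n → ℝ) × ℝ) := ν.prod (volume.prod volume)
  let e := (bordered n).toContinuousLinearEquiv
  have : ρ.IsAddHaarMeasure := Measure.prod.instIsAddHaarMeasure _ _
  have : (ρ.map e).IsAddHaarMeasure := e.isAddHaarMeasure_map ρ
  obtain ⟨c, hc⟩ : ∃ c : ℝ≥0, μ = c • ρ.map e := ⟨_, Measure.isAddLeftInvariant_eq_smul μ _⟩
  refine ⟨c, fun F hF => ?_⟩
  have hFe : Measurable fun p => F (e p) := hF.comp e.continuous.measurable
  rw [hc, lintegral_smul_measure,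
    lintegral_map hF e.continuous.measurable, lintegral_prod _ hFe.aemeasurable]
  congr 1
  refine lintegral_congr fun A => ?_
  rw [lintegral_prod _ (by fun_prop)]
  rfl

theorem indicator_loewnerInterval_detRpow_bordered_le (a : ℝ) (A : SymMat n) (v : Fin n → ℝ)
    (t : ℝ) :
    (loewnerInterval (n + 1)).indicator (detRpow a) (bordered n (A, v, t)) ≤
      (loewnerInterval n).indicator (detRpow a) A *
        ((Set.Icc (-1 : Fin n → ℝ) 1).indicator 1 v *
          (Set.Ioc (0 : ℝ) 1).indicator (fun u => ENNReal.ofReal (u ^ a))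
            (t - v ⬝ᵥ A.1⁻¹ *ᵥ v)) := by
  by_cases h : bordered n (A, v, t) ∈ loewnerInterval (n + 1)
  · have hA := mem_loewnerInterval_of_bordered h
    have hschur := sub_dotProduct_inv_mulVec_mem_Ioc_of_bordered_mem_loewnerInterval h
    rw [Set.indicator_of_mem h, Set.indicator_of_mem hA,
      Set.indicator_of_mem (mem_Icc_of_bordered_mem_loewnerInterval h), Set.indicator_of_mem hschur,
      detRpow_of_mem a h.1, detRpow_of_mem a hA.1, det_bordered A v t hA.1.isUnit,
      Real.mul_rpow hA.1.det_pos.le hschur.1.le,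
      ENNReal.ofReal_mul (Real.rpow_nonneg hA.1.det_pos.le a), Pi.one_apply, one_mul]
  · rw [Set.indicator_of_notMem h]
    exact zero_le

theorem lintegral_loewnerInterval_detRpow_lt_top {a : ℝ} (ha : -1 < a) (μ : Measure (SymMat n))
    [μ.IsAddHaarMeasure] : ∫⁻ x in loewnerInterval n, detRpow a x ∂μ < ∞ := by
  induction n with
  | zero =>
    have : IsFiniteMeasure μ := ⟨Set.subsingleton_univ.finite.isCompact.measure_lt_top⟩
    have hle (x : SymMat 0) : detRpow a x ≤ 1 := by
      rw [detRpow]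
      exact Set.indicator_apply_le' (fun _ => by simp) fun _ => zero_le_one
    calc ∫⁻ x in loewnerInterval 0, detRpow a x ∂μ ≤ ∫⁻ _ in loewnerInterval 0, 1 ∂μ :=
          lintegral_mono hle
      _ < ∞ := by simp
  | succ n ih =>
    let ν : Measure (SymMat n) := Measure.addHaar
    obtain ⟨c, hc⟩ := exists_lintegral_eq_mul_lintegral_bordered μ ν
    have hmeas (m : ℕ) : Measurable ((loewnerInterval m).indicator (detRpow (n := m) a)) :=
      (measurable_detRpow a).indicator isOpen_loewnerInterval.measurableSet
    have hrpow : Measurable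
        ((Set.Ioc (0 : ℝ) 1).indicator fun t => ENNReal.ofReal (t ^ a)) := by
      refine Measurable.indicator ?_ measurableSet_Ioc
      fun_prop
    rw [← lintegral_indicator isOpen_loewnerInterval.measurableSet, hc _ (hmeas _)]
    refine ENNReal.mul_lt_top ENNReal.coe_lt_top ((lintegral_mono fun A => lintegral_mono fun v =>
      lintegral_mono fun t => indicator_loewnerInterval_detRpow_bordered_le a A v t).trans_lt ?_)
    rw [lintegral_mul_mul_comp_sub ν volume volume (hmeas n)
      (measurable_one.indicator measurableSet_Icc) hrpow fun A v => v ⬝ᵥ A.1⁻¹ *ᵥ v,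
      lintegral_indicator isOpen_loewnerInterval.measurableSet,
      lintegral_indicator_one measurableSet_Icc, lintegral_indicator measurableSet_Ioc]
    exact ENNReal.mul_lt_top (ih ν)
      (ENNReal.mul_lt_top isCompact_Icc.measure_lt_top (lintegral_Ioc_ofReal_rpow_lt_top ha))

end Integrability

section Convolution

variable {n : ℕ} (μ : Measure (SymMat n)) [μ.IsAddHaarMeasure] (a b : ℝ)

theorem lconvolution_detRpow_congruence {q : Matrix (Fin n) (Fin n) ℝ} (hq : IsUnit q)
    (s : SymMat n) :
    (detRpow a ⋆ₗ[μ] detRpow b) (congruence q s) =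
      ENNReal.ofReal ((q.det ^ 2) ^ (a + b + ((n : ℝ) + 1) / 2)) *
        (detRpow a ⋆ₗ[μ] detRpow b) s := by
  have hq0 : q.det ≠ 0 := ((Matrix.isUnit_iff_isUnit_det q).1 hq).ne_zero
  have hpos : 0 < q.det ^ 2 := by positivity
  have hJ : |LinearMap.det (congruence q)| = (q.det ^ 2) ^ (((n : ℝ) + 1) / 2) := by
    rw [det_congruence, abs_pow, ← sq_abs q.det, ← Real.rpow_natCast, ← Real.rpow_natCast,
      ← Real.rpow_mul (abs_nonneg _)]
    congr 1
    push_cast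
    ring
  have hJ0 : LinearMap.det (congruence q) ≠ 0 := by
    rw [det_congruence]
    exact pow_ne_zero _ hq0
  have hscale (x : SymMat n) :
      (detRpow a ∘ congruence q) x * (detRpow b ∘ congruence q) (-x + s) =
        ENNReal.ofReal ((q.det ^ 2) ^ (a + b)) * (detRpow a x * detRpow b (-x + s)) := by
    rw [Function.comp_apply, Function.comp_apply, detRpow_congruence a hq, detRpow_congruence b hq,
      Real.rpow_add hpos, ENNReal.ofReal_mul (by positivity), mul_mul_mul_comm]
  rw [lconvolution_apply_linearMap μ hJ0, hJ, lconvolution_def, lintegral_congr hscale,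
    lintegral_const_mul _ (by fun_prop), ← lconvolution_def, ← mul_assoc,
    ← ENNReal.ofReal_mul (by positivity), ← Real.rpow_add hpos, add_comm (a + b)]

theorem lconvolution_detRpow (s : SymMat n) :
    (detRpow a ⋆ₗ[μ] detRpow b) s =
      (detRpow a ⋆ₗ[μ] detRpow b) 1 * detRpow (a + b + ((n : ℝ) + 1) / 2) s := by
  by_cases hs : s ∈ posDefCone n
  · obtain ⟨q, hq, hsq⟩ := exists_isUnit_eq_mul_transpose_of_posDef hs
    have hone : congruence q 1 = s := by
      ext1
      simp [hsq]
    have hdet : s.1.det = q.det ^ 2 := by rw [hsq, Matrix.det_mul, Matrix.det_transpose, sq]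
    rw [detRpow_of_mem _ hs, hdet, mul_comm, ← lconvolution_detRpow_congruence μ a b hq, hone]
  · rw [detRpow_of_notMem _ hs, mul_zero, lconvolution_def]
    refine (lintegral_congr fun x => ?_).trans lintegral_zero
    by_cases hx : x ∈ posDefCone n
    · have hsx : -x + s ∉ posDefCone n := fun h => hs (by simpa using add_mem_posDefCone hx h)
      rw [detRpow_of_notMem b hsx, mul_zero]
    · rw [detRpow_of_notMem a hx, zero_mul]

theorem lconvolution_detRpow_one_ne_zero : (detRpow a ⋆ₗ[μ] detRpow b) 1 ≠ 0 := by
  rw [lconvolution_def]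
  refine ((lintegral_pos_iff_support (by fun_prop)).2 ?_).ne'
  refine (isOpen_loewnerInterval.measure_pos μ loewnerInterval_nonempty).trans_le
    (measure_mono fun x hx => ?_)
  rw [Function.mem_support, neg_add_eq_sub]
  exact mul_ne_zero (detRpow_ne_zero a hx.1) (detRpow_ne_zero b hx.2)

variable {a b}

theorem exists_mem_loewnerInterval_lconvolution_detRpow_lt_top (ha : -1 < a) (hb : -1 < b) :
    ∃ s ∈ loewnerInterval n, (detRpow a ⋆ₗ[μ] detRpow b) s < ∞ := by
  let f (a : ℝ) : SymMat n → ℝ≥0∞ := (loewnerInterval n).indicator (detRpow a)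
  have hmeas (a : ℝ) : Measurable (f a) :=
    (measurable_detRpow a).indicator isOpen_loewnerInterval.measurableSet
  have hint (a : ℝ) (ha : -1 < a) : ∫⁻ x, f a x ∂μ < ∞ := by
    rw [lintegral_indicator isOpen_loewnerInterval.measurableSet]
    exact lintegral_loewnerInterval_detRpow_lt_top ha μ
  have hconv : ∫⁻ s, (f a ⋆ₗ[μ] f b) s ∂μ ≠ ∞ := by
    rw [lintegral_lconvolution μ (hmeas a) (hmeas b)]
    exact (ENNReal.mul_lt_top (hint a ha) (hint b hb)).ne
  have hagree (s) (hs : s ∈ loewnerInterval n) :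
      (detRpow a ⋆ₗ[μ] detRpow b) s ≤ (f a ⋆ₗ[μ] f b) s := by
    refine lintegral_mono fun x => ?_
    simp only [neg_add_eq_sub]
    by_cases hx : x ∈ posDefCone n
    · by_cases hsx : s - x ∈ posDefCone n
      · have hx' := mem_loewnerInterval_of_sub_mem_posDefCone hs hx hsx
        have hsx' : s - x ∈ loewnerInterval n :=
          mem_loewnerInterval_of_sub_mem_posDefCone hs hsx (by simpa using hx)
        simp only [f, Set.indicator_of_mem hx', Set.indicator_of_mem hsx', le_refl]
      · simp [detRpow_of_notMem b hsx]
    · simp [detRpow_of_notMem a hx]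
  have hfinite := ae_lt_top (measurable_lconvolution μ (hmeas a) (hmeas b)) hconv
  obtain ⟨s, hlt, hs⟩ := (Measure.dense_of_ae hfinite).exists_mem_open isOpen_loewnerInterval
    loewnerInterval_nonempty
  exact ⟨s, hs, (hagree s hs).trans_lt hlt⟩

theorem lconvolution_detRpow_one_ne_top (ha : -1 < a) (hb : -1 < b) :
    (detRpow a ⋆ₗ[μ] detRpow b) 1 ≠ ∞ := by
  obtain ⟨s, hs, hlt⟩ := exists_mem_loewnerInterval_lconvolution_detRpow_lt_top μ ha hb
  rw [lconvolution_detRpow] at hlt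
  exact (ENNReal.lt_top_of_mul_ne_top_left hlt.ne (detRpow_ne_zero _ hs.1)).ne

end Convolution

/-- The function `x ↦ exp (ℓ x) * det x ^ a` on the positive definite cone, extended by `0`: a
Wishart density whose scale parameter is replaced by an arbitrary linear functional `ℓ`. -/
noncomputable def tiltedDetRpow {n : ℕ} (ℓ : SymMat n →ₗ[ℝ] ℝ) (a : ℝ) : SymMat n → ℝ :=
  (posDefCone n).indicator fun x => Real.exp (ℓ x) * x.1.det ^ a

section TiltedDetRpow

variable {n : ℕ} (ℓ : SymMat n →ₗ[ℝ] ℝ) (a b : ℝ)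

theorem tiltedDetRpow_eq_exp_mul_toReal_detRpow (x : SymMat n) :
    tiltedDetRpow ℓ a x = Real.exp (ℓ x) * (detRpow a x).toReal := by
  by_cases hx : x ∈ posDefCone n
  · rw [tiltedDetRpow, Set.indicator_of_mem hx, detRpow_of_mem a hx,
      ENNReal.toReal_ofReal (Real.rpow_nonneg hx.det_pos.le a)]
  · simp [tiltedDetRpow, detRpow_of_notMem a hx, hx]

theorem integral_tiltedDetRpow_mul_tiltedDetRpow_sub (μ : Measure (SymMat n)) (s : SymMat n) :
    ∫ x, tiltedDetRpow ℓ a x * tiltedDetRpow ℓ b (s - x) ∂μ =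
      Real.exp (ℓ s) * ((detRpow a ⋆ₗ[μ] detRpow b) s).toReal := by
  have hexp (x : SymMat n) : tiltedDetRpow ℓ a x * tiltedDetRpow ℓ b (s - x) =
      Real.exp (ℓ s) * (detRpow a x * detRpow b (-x + s)).toReal := by
    rw [tiltedDetRpow_eq_exp_mul_toReal_detRpow, tiltedDetRpow_eq_exp_mul_toReal_detRpow,
      mul_mul_mul_comm, ← Real.exp_add, ← map_add, add_sub_cancel, ← ENNReal.toReal_mul,
      neg_add_eq_sub]
  simp_rw [hexp]
  rw [integral_const_mul, lconvolution_def, integral_toReal]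
  · fun_prop
  · exact .of_forall fun x => ENNReal.mul_lt_top (detRpow_ne_top a x).lt_top
      (detRpow_ne_top b _).lt_top

end TiltedDetRpow

/-- The exponent `-tr(S⁻¹x)/2` of the Wishart density with scale `S`. -/
noncomputable def wishartExponent {n : ℕ} (S : Matrix (Fin n) (Fin n) ℝ) : SymMat n →ₗ[ℝ] ℝ :=
  (-1 / 2 : ℝ) • Matrix.traceLinearMap (Fin n) ℝ ℝ ∘ₗ LinearMap.mulLeft ℝ S⁻¹ ∘ₗ
    (symMatSubmodule n).subtype

theorem wishartDensity_eq_tiltedDetRpow {n : ℕ} (η : ℝ) (S : Matrix (Fin n) (Fin n) ℝ) :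
    wishartDensity n η S = tiltedDetRpow (wishartExponent S) (η / 2 - ((n : ℝ) + 1) / 2) := by
  classical
  ext x
  have hℓ : wishartExponent S x = -(S⁻¹ * x.1).trace / 2 := by
    simp [wishartExponent]
    ring
  rw [wishartDensity, tiltedDetRpow, Set.indicator_apply, hℓ]
  rfl

end SymMat

open SymMat

theorem wishart_convolution_general {n : ℕ} (μ : Measure (SymMat n)) [μ.IsAddHaarMeasure]
    (ℓ : SymMat n →ₗ[ℝ] ℝ) {a b : ℝ} (ha : -1 < a) (hb : -1 < b) :
    ∃ c : ℝ, 0 < c ∧ ∀ s : SymMat n,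
      ∫ x, tiltedDetRpow ℓ a x * tiltedDetRpow ℓ b (s - x) ∂μ =
        c * tiltedDetRpow ℓ (a + b + ((n : ℝ) + 1) / 2) s := by
  refine ⟨((detRpow a ⋆ₗ[μ] detRpow b) 1).toReal, ENNReal.toReal_pos
    (lconvolution_detRpow_one_ne_zero μ a b) (lconvolution_detRpow_one_ne_top μ ha hb),
    fun s => ?_⟩
  rw [integral_tiltedDetRpow_mul_tiltedDetRpow_sub, lconvolution_detRpow, ENNReal.toReal_mul,
    tiltedDetRpow_eq_exp_mul_toReal_detRpow]
  ring

/-- Convolution of Wishart densities on `Sym_n(ℝ)`: for `η₁, η₂ > n − 1` and a common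
symmetric positive definite scale `Σ`, there is a constant `c > 0` with
`∫ w_{η₁,Σ}(x) · w_{η₂,Σ}(s − x) dμ(x) = c · w_{η₁+η₂,Σ}(s)` for all `s`: the sum of two
independent Wishart matrices with shapes `η₁, η₂` and scale `Σ` is Wishart with shape
`η₁ + η₂` and scale `Σ`. -/
theorem wishart_convolution {n : ℕ} (hn : 1 ≤ n)
    (μ : Measure (SymMat n)) [μ.IsAddHaarMeasure]
    (η₁ η₂ : ℝ) (hη₁ : (n : ℝ) - 1 < η₁) (hη₂ : (n : ℝ) - 1 < η₂)
    (S : Matrix (Fin n) (Fin n) ℝ) (hS : S.PosDef) (hSsymm : S.IsSymm) :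
    ∃ c : ℝ, 0 < c ∧ ∀ s : SymMat n,
      (∫ x : SymMat n, wishartDensity n η₁ S x * wishartDensity n η₂ S (s - x) ∂μ) =
        c * wishartDensity n (η₁ + η₂) S s := by
  have hη : (η₁ + η₂) / 2 - ((n : ℝ) + 1) / 2 = (η₁ / 2 - ((n : ℝ) + 1) / 2) +
      (η₂ / 2 - ((n : ℝ) + 1) / 2) + ((n : ℝ) + 1) / 2 := by ring
  simp only [wishartDensity_eq_tiltedDetRpow, hη]
  exact wishart_convolution_general μ (wishartExponent S) (by linarith) (by linarith)
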